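/- arXiv:2605.25791 — 4 statements merged into one kernel-verified Lean document; each statement's English description precedes it below -/
import Mathlib

section
/- In the two-party binary DPF construction, for every level 0 ≤ l ≤ n and every input x = x_1…x_n ∈ {0,1}^n the following invariant holds: (i) if the prefix x_1…x_l equals α_1…α_l, then for b = 0,1 the evaluation states satisfy (σ_b^{(l)}(x), τ_b^{(l)}(x)) = (s_b^{(l)}, t_b^{(l)}), and moreover t_0^{(l)} ⊕ t_1^{(l)} = 1; (ii) if x_1…x_l ≠ α_1…α_l, then σ_0^{(l)}(x) = σ_1^{(l)}(x) and τ_0^{(l)}(x) = τ_1^{(l)}(x). This holds for every choice of the expansion function G, the function Convert, and the initial seeds. -/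
namespace DPF

variable {lam : ℕ}

/-- One step of DPF key generation at a level with point-bit `a` (`a = true`
means `Keep = R`, `a = false` means `Keep = L`): given the current states
`(s₀, t₀, s₁, t₁)`, produce the new states together with the correction word
`(s_CW, t_CW^L, t_CW^R)` of this level. -/
def genStep (G : BitVec lam → BitVec lam × Bool × BitVec lam × Bool) (a : Bool)
    (st : BitVec lam × Bool × BitVec lam × Bool) :
    (BitVec lam × Bool × BitVec lam × Bool) × (BitVec lam × Bool × Bool) :=
  let (s0, t0, s1, t1) := st
  let (s0L, t0L, s0R, t0R) := G s0
  let (s1L, t1L, s1R, t1R) := G s1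
  -- Lose is the direction opposite to Keep
  let sCW : BitVec lam := if a then s0L ^^^ s1L else s0R ^^^ s1R
  let tCWL : Bool := (((t0L != t1L) != a) != true)
  let tCWR : Bool := ((t0R != t1R) != a)
  let s0keep := if a then s0R else s0L
  let s1keep := if a then s1R else s1L
  let t0keep := if a then t0R else t0L
  let t1keep := if a then t1R else t1L
  let tCWkeep := if a then tCWR else tCWL
  let s0' := s0keep ^^^ (if t0 then sCW else 0#lam)
  let s1' := s1keep ^^^ (if t1 then sCW else 0#lam)
  let t0' := t0keep != (t0 && tCWkeep)
  let t1' := t1keep != (t1 && tCWkeep)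
  ((s0', t0', s1', t1'), (sCW, tCWL, tCWR))

/-- Key-generation data after `l` levels for point `α` (1-indexed bits) and
initial seeds `s0init`, `s1init`: the first component is the state
`(s₀^{(l)}, t₀^{(l)}, s₁^{(l)}, t₁^{(l)})`, the second is the level-`l`
correction word `CW^{(l)} = (s_CW^{(l)}, t_CW^{L,(l)}, t_CW^{R,(l)})`
(a dummy value at level `0`). -/
def gen (G : BitVec lam → BitVec lam × Bool × BitVec lam × Bool)
    (α : ℕ → Bool) (s0init s1init : BitVec lam) :
    ℕ → (BitVec lam × Bool × BitVec lam × Bool) × (BitVec lam × Bool × Bool)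
  | 0 => ((s0init, false, s1init, true), (0#lam, false, false))
  | l + 1 => genStep G (α (l + 1)) (gen G α s0init s1init l).1

/-- One evaluation step with correction word `cw` and input bit `xb`. -/
def evalStep (G : BitVec lam → BitVec lam × Bool × BitVec lam × Bool)
    (cw : BitVec lam × Bool × Bool) (xb : Bool) (st : BitVec lam × Bool) :
    BitVec lam × Bool :=
  let (σ, τ) := st
  let (σL, τL, σR, τR) := G σ
  let (sCW, tCWL, tCWR) := cw
  let σhatL := σL ^^^ (if τ then sCW else 0#lam)
  let σhatR := σR ^^^ (if τ then sCW else 0#lam)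
  let τhatL := τL != (τ && tCWL)
  let τhatR := τR != (τ && tCWR)
  if xb then (σhatR, τhatR) else (σhatL, τhatL)

/-- Evaluation state `(σ_b^{(l)}(x), τ_b^{(l)}(x))` of party `b`
(`b = false` is party 0, `b = true` is party 1) after `l` levels on input `x`
(1-indexed bits). -/
def evalSt (G : BitVec lam → BitVec lam × Bool × BitVec lam × Bool)
    (α : ℕ → Bool) (s0init s1init : BitVec lam) (b : Bool) (x : ℕ → Bool) :
    ℕ → BitVec lam × Bool
  | 0 => (if b then s1init else s0init, b)
  | l + 1 =>
      evalStep G (gen G α s0init s1init (l + 1)).2 (x (l + 1))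
        (evalSt G α s0init s1init b x l)

end DPF

/-!
When the two parties' control bits differ, exactly one of them applies the correction word, so a
step turns the XOR of their two expansions into that XOR, XORed once more with the correction word.
The correction word is chosen so that the result has control-bit difference `1` on the kept side
and vanishes entirely on the lost side. Hence along the path of `α` the control bits always differ,
and the states collapse to a common value at the first level where `x` leaves the path; from there
on both parties perform the same computation.
-/

namespace DPF

/-- The first (`d = false`) or second (`d = true`) seed–bit pair of a quadruple. It is both the
child in direction `d` (`true` is `R`) of an expansion `G s` and the state of party `d` in a
key-generation state. -/
def half {S : Type*} (d : Bool) (p : S × Bool × S × Bool) : S × Bool :=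
  if d then p.2.2 else (p.1, p.2.1)

/-- The control-bit correction `t_CW^D` of a correction word for the direction `D` encoded by `d`
(`true` is `R`). -/
def controlCW {S : Type*} (d : Bool) (cw : S × Bool × Bool) : Bool :=
  if d then cw.2.2 else cw.2.1

/-- The point `x` lies on the path of `α` down to level `l`: their prefixes of length `l` agree. -/
def OnPath (α x : ℕ → Bool) (l : ℕ) : Prop :=
  ∀ j, 1 ≤ j → j ≤ l → x j = α j

lemma onPath_zero (α x : ℕ → Bool) : OnPath α x 0 :=
  fun _ hpos hzero => absurd (hpos.trans hzero) (Nat.not_succ_le_zero 0)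

lemma onPath_succ_iff {α x : ℕ → Bool} {l : ℕ} :
    OnPath α x (l + 1) ↔ OnPath α x l ∧ x (l + 1) = α (l + 1) := by
  constructor
  · exact fun h => ⟨fun j hpos hj => h j hpos (Nat.le_succ_of_le hj), h _ l.succ_pos le_rfl⟩
  · rintro ⟨hl, hnext⟩ j hpos hj
    obtain hj | rfl := Nat.le_succ_iff.mp hj
    · exact hl j hpos hj
    · exact hnext

section Step

variable {lam : ℕ} (G : BitVec lam → BitVec lam × Bool × BitVec lam × Bool)

lemma evalStep_fst (cw : BitVec lam × Bool × Bool) (d : Bool) (st : BitVec lam × Bool) :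
    (evalStep G cw d st).1 = (half d (G st.1)).1 ^^^ (if st.2 then cw.1 else 0#lam) := by
  cases d <;> rfl

lemma evalStep_snd (cw : BitVec lam × Bool × Bool) (d : Bool) (st : BitVec lam × Bool) :
    (evalStep G cw d st).2 = ((half d (G st.1)).2 ^^ (st.2 && controlCW d cw)) := by
  cases d <;> rfl

lemma evalStep_fst_xor (cw : BitVec lam × Bool × Bool) (d : Bool)
    {st₀ st₁ : BitVec lam × Bool} (hne : st₀.2 ≠ st₁.2) :
    (evalStep G cw d st₀).1 ^^^ (evalStep G cw d st₁).1 =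
      (half d (G st₀.1)).1 ^^^ (half d (G st₁.1)).1 ^^^ cw.1 := by
  rw [evalStep_fst, evalStep_fst, Bool.eq_not_of_ne hne]
  cases st₁.2 <;> simp [BitVec.xor_assoc, BitVec.xor_comm cw.1]

lemma evalStep_snd_xor (cw : BitVec lam × Bool × Bool) (d : Bool)
    {st₀ st₁ : BitVec lam × Bool} (hne : st₀.2 ≠ st₁.2) :
    ((evalStep G cw d st₀).2 ^^ (evalStep G cw d st₁).2) =
      ((half d (G st₀.1)).2 ^^ (half d (G st₁.1)).2 ^^ controlCW d cw) := by
  rw [evalStep_snd, evalStep_snd, Bool.eq_not_of_ne hne]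
  cases st₁.2 <;> simp [Bool.xor_comm (controlCW d cw)]

variable (a : Bool) (st : BitVec lam × Bool × BitVec lam × Bool)

lemma half_genStep (b : Bool) :
    half b (genStep G a st).1 = evalStep G (genStep G a st).2 a (half b st) := by
  cases a <;> cases b <;> rfl

lemma seedCW_genStep :
    (genStep G a st).2.1 =
      (half (!a) (G (half false st).1)).1 ^^^ (half (!a) (G (half true st).1)).1 := by
  cases a <;> rfl

lemma controlCW_genStep (d : Bool) :
    controlCW d (genStep G a st).2 =
      ((half d (G (half false st).1)).2 ^^ (half d (G (half true st).1)).2 ^^ d == a) := by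
  cases a <;> cases d <;> simp [controlCW, genStep, half]

variable {st}

lemma evalStep_genStep_snd_xor (hne : (half false st).2 ≠ (half true st).2) (d : Bool) :
    ((evalStep G (genStep G a st).2 d (half false st)).2 ^^
      (evalStep G (genStep G a st).2 d (half true st)).2) = (d == a) := by
  rw [evalStep_snd_xor G _ d hne, controlCW_genStep]
  exact Bool.bne_self_left ..

lemma genStep_control_ne (hne : (half false st).2 ≠ (half true st).2) :
    (half false (genStep G a st).1).2 ≠ (half true (genStep G a st).1).2 := by
  rw [← Bool.xor_iff_ne, half_genStep, half_genStep, evalStep_genStep_snd_xor G a hne,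
    beq_self_eq_true]

lemma evalStep_genStep_eq_of_ne {d : Bool} (hd : d ≠ a)
    (hne : (half false st).2 ≠ (half true st).2) :
    evalStep G (genStep G a st).2 d (half false st) =
      evalStep G (genStep G a st).2 d (half true st) := by
  apply Prod.ext
  · rw [← BitVec.xor_eq_zero_iff, evalStep_fst_xor G _ d hne, seedCW_genStep,
      Bool.eq_not_of_ne hd, BitVec.xor_self]
  · have hxor := evalStep_genStep_snd_xor G a hne d
    exact bne_eq_false_iff_eq.mp (hxor.trans (beq_eq_false_iff_ne.mpr hd))

end Step

section Path

variable {lam : ℕ} (G : BitVec lam → BitVec lam × Bool × BitVec lam × Bool)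
  (α : ℕ → Bool) (s0init s1init : BitVec lam)

lemma gen_control_ne (l : ℕ) :
    (half false (gen G α s0init s1init l).1).2 ≠ (half true (gen G α s0init s1init l).1).2 := by
  induction l with
  | zero => exact Bool.false_ne_true
  | succ l ih => exact genStep_control_ne G (α (l + 1)) ih

variable {α} {x : ℕ → Bool} {l : ℕ}

lemma evalSt_eq_half_gen_of_onPath (b : Bool) (hx : OnPath α x l) :
    evalSt G α s0init s1init b x l = half b (gen G α s0init s1init l).1 := by
  induction l with
  | zero => cases b <;> rfl
  | succ l ih =>
    obtain ⟨hl, hnext⟩ := onPath_succ_iff.mp hx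
    rw [evalSt, ih hl, hnext, gen, half_genStep]

lemma evalSt_false_eq_evalSt_true_of_not_onPath (hx : ¬ OnPath α x l) :
    evalSt G α s0init s1init false x l = evalSt G α s0init s1init true x l := by
  induction l with
  | zero => exact absurd (onPath_zero α x) hx
  | succ l ih =>
    rw [evalSt, evalSt]
    by_cases hl : OnPath α x l
    · have hleave : x (l + 1) ≠ α (l + 1) := fun hnext => hx (onPath_succ_iff.mpr ⟨hl, hnext⟩)
      rw [evalSt_eq_half_gen_of_onPath G s0init s1init false hl,
        evalSt_eq_half_gen_of_onPath G s0init s1init true hl]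
      exact evalStep_genStep_eq_of_ne G _ hleave (gen_control_ne G α s0init s1init l)
    · rw [ih hl]

end Path

end DPF

/-- Invariant of the two-party binary DPF construction: for every level
`0 ≤ l ≤ n` and every input `x ∈ {0,1}^n`, (i) if the length-`l` prefix of `x`
equals that of `α`, then for each party `b` the evaluation state equals the
key-generation state `(s_b^{(l)}, t_b^{(l)})`, and `t₀^{(l)} ⊕ t₁^{(l)} = 1`;
(ii) otherwise, the two parties' evaluation states coincide. This holds for
every choice of the expansion function `G`, the function `Convert`, and the
initial seeds. -/
theorem dpf_eval_invariant {lam n : ℕ} {Grp : Type*} [AddCommGroup Grp]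
    (G : BitVec lam → BitVec lam × Bool × BitVec lam × Bool)
    (Convert : BitVec lam → Grp)
    (α : ℕ → Bool) (s0init s1init : BitVec lam)
    (l : ℕ) (hl : l ≤ n) (x : ℕ → Bool) :
    ((∀ j, 1 ≤ j → j ≤ l → x j = α j) →
      DPF.evalSt G α s0init s1init false x l =
        ((DPF.gen G α s0init s1init l).1.1, (DPF.gen G α s0init s1init l).1.2.1) ∧
      DPF.evalSt G α s0init s1init true x l =
        ((DPF.gen G α s0init s1init l).1.2.2.1, (DPF.gen G α s0init s1init l).1.2.2.2) ∧
      (((DPF.gen G α s0init s1init l).1.2.1 != (DPF.gen G α s0init s1init l).1.2.2.2) = true)) ∧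
    ((¬ ∀ j, 1 ≤ j → j ≤ l → x j = α j) →
      DPF.evalSt G α s0init s1init false x l = DPF.evalSt G α s0init s1init true x l) := by
  refine ⟨fun hx => ⟨?_, ?_, ?_⟩, fun hx => ?_⟩
  · exact DPF.evalSt_eq_half_gen_of_onPath G s0init s1init false hx
  · exact DPF.evalSt_eq_half_gen_of_onPath G s0init s1init true hx
  · exact bne_iff_ne.mpr (DPF.gen_control_ne G α s0init s1init l)
  · exact DPF.evalSt_false_eq_evalSt_true_of_not_onPath G s0init s1init hx
end

section
/- In the two-party binary DPF construction, for all choices of the expansion function G, the function Convert, the initial seeds s_0^{(0)}, s_1^{(0)}, the point α ∈ {0,1}^n and the payload β ∈ 𝔾, and for every input x ∈ {0,1}^n, the reconstructed output satisfies y_0(x) + y_1(x) = β if x = α, and y_0(x) + y_1(x) = 0 otherwise. -/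
/-!
Generating keys for `α` amounts to evaluating both parties side by side at `α`. As long as the
control bits are complementary, exactly one party applies the correction word, so the XOR of the
two parties' states after a step in direction `d` is the XOR of the two expansions in direction `d`
with the correction word added once. The correction words are chosen so that this is `0` in both
components in the losing direction and `1` in the control bit in the keep direction. Hence the
control bits stay complementary along `α`, and at the first bit where `x` leaves `α` the states
become equal and remain so, which makes the outputs cancel. On `α` itself exactly one party adds
the final correction word, and its sign offsets the sign of that party's output.
-/

namespace DPF

variable {lam : ℕ}

/-- The final correction word
`CW^{(n+1)} = (−1)^{t₁^{(n)}} · (β − Convert(s₀^{(n)}) + Convert(s₁^{(n)}))`. -/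
def finalCW {Grp : Type*} [AddCommGroup Grp]
    (G : BitVec lam → BitVec lam × Bool × BitVec lam × Bool)
    (Convert : BitVec lam → Grp) (α : ℕ → Bool) (β : Grp)
    (s0init s1init : BitVec lam) (n : ℕ) : Grp :=
  let st := (gen G α s0init s1init n).1
  let g := β - Convert st.1 + Convert st.2.2.1
  if st.2.2.2 then -g else g

/-- The output of party `b` on input `x`:
`y_b(x) = (−1)^b · (Convert(σ_b^{(n)}(x)) + τ_b^{(n)}(x) • CW^{(n+1)})`. -/
def output {Grp : Type*} [AddCommGroup Grp]
    (G : BitVec lam → BitVec lam × Bool × BitVec lam × Bool)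
    (Convert : BitVec lam → Grp) (α : ℕ → Bool) (β : Grp)
    (s0init s1init : BitVec lam) (n : ℕ) (b : Bool) (x : ℕ → Bool) : Grp :=
  let st := evalSt G α s0init s1init b x n
  let v := Convert st.1 + (if st.2 then finalCW G Convert α β s0init s1init n else 0)
  if b then -v else v

end DPF

namespace DPF

section Step

variable {lam : ℕ} (G : BitVec lam → BitVec lam × Bool × BitVec lam × Bool)

/-- The half `(s^D, t^D)` of the expansion `G s` in direction `D`, with `d = true` for `D = R` and
`d = false` for `D = L`. -/
def child (d : Bool) (s : BitVec lam) : BitVec lam × Bool :=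
  if d then (G s).2.2 else ((G s).1, (G s).2.1)

/-- The bit `t_CW^D` of a correction word `(s_CW, t_CW^L, t_CW^R)`, with `d = true` for `D = R` and
`d = false` for `D = L`. -/
def cwBit (cw : BitVec lam × Bool × Bool) (d : Bool) : Bool :=
  if d then cw.2.2 else cw.2.1

theorem evalStep_eq (cw : BitVec lam × Bool × Bool) (d : Bool) (p : BitVec lam × Bool) :
    evalStep G cw d p =
      ((child G d p.1).1 ^^^ (if p.2 then cw.1 else 0#lam),
        (child G d p.1).2 ^^ (p.2 && cwBit cw d)) := by
  cases d <;> simp [evalStep, child, cwBit]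

theorem evalStep_fst_xor_evalStep_fst (cw : BitVec lam × Bool × Bool) (d : Bool)
    {p₀ p₁ : BitVec lam × Bool} (h : p₁.2 = !p₀.2) :
    (evalStep G cw d p₀).1 ^^^ (evalStep G cw d p₁).1 =
      (child G d p₀.1).1 ^^^ (child G d p₁.1).1 ^^^ cw.1 := by
  cases h₀ : p₀.2 <;>
    simp [evalStep_eq, h, h₀, BitVec.xor_assoc, BitVec.xor_comm cw.1]

theorem evalStep_snd_xor_evalStep_snd (cw : BitVec lam × Bool × Bool) (d : Bool)
    {p₀ p₁ : BitVec lam × Bool} (h : p₁.2 = !p₀.2) :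
    ((evalStep G cw d p₀).2 ^^ (evalStep G cw d p₁).2) =
      ((child G d p₀.1).2 ^^ (child G d p₁.1).2 ^^ cwBit cw d) := by
  cases h₀ : p₀.2 <;>
    simp [evalStep_eq, h, h₀, Bool.xor_comm (cwBit cw d)]

theorem genStep_fst (a : Bool) (p₀ p₁ : BitVec lam × Bool) :
    (genStep G a (p₀.1, p₀.2, p₁)).1 =
      ((evalStep G (genStep G a (p₀.1, p₀.2, p₁)).2 a p₀).1,
        (evalStep G (genStep G a (p₀.1, p₀.2, p₁)).2 a p₀).2,
        evalStep G (genStep G a (p₀.1, p₀.2, p₁)).2 a p₁) := by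
  cases a <;> rfl

theorem genStep_snd_fst (a : Bool) (p₀ p₁ : BitVec lam × Bool) :
    (genStep G a (p₀.1, p₀.2, p₁)).2.1 =
      (child G (!a) p₀.1).1 ^^^ (child G (!a) p₁.1).1 := by
  cases a <;> rfl

theorem cwBit_genStep_snd (a d : Bool) (p₀ p₁ : BitVec lam × Bool) :
    cwBit (genStep G a (p₀.1, p₀.2, p₁)).2 d =
      ((child G d p₀.1).2 ^^ (child G d p₁.1).2 ^^ (d == a)) := by
  cases a <;> cases d <;> simp [cwBit, genStep, child]

theorem evalStep_genStep_snd_xor_s5 (a d : Bool) {p₀ p₁ : BitVec lam × Bool} (h : p₁.2 = !p₀.2) :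
    ((evalStep G (genStep G a (p₀.1, p₀.2, p₁)).2 d p₀).2 ^^
      (evalStep G (genStep G a (p₀.1, p₀.2, p₁)).2 d p₁).2) = (d == a) := by
  rw [evalStep_snd_xor_evalStep_snd G _ d h, cwBit_genStep_snd,
    ← Bool.xor_assoc, Bool.xor_self, Bool.false_xor]

theorem evalStep_genStep_self_snd (a : Bool) {p₀ p₁ : BitVec lam × Bool} (h : p₁.2 = !p₀.2) :
    (evalStep G (genStep G a (p₀.1, p₀.2, p₁)).2 a p₁).2 =
      !(evalStep G (genStep G a (p₀.1, p₀.2, p₁)).2 a p₀).2 := by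
  have hxor := evalStep_genStep_snd_xor_s5 G a a h
  rw [beq_self_eq_true, Bool.xor_comm] at hxor
  exact Bool.eq_not_of_ne (bne_iff_ne.mp hxor)

theorem evalStep_genStep_not_eq (a : Bool) {p₀ p₁ : BitVec lam × Bool} (h : p₁.2 = !p₀.2) :
    evalStep G (genStep G a (p₀.1, p₀.2, p₁)).2 (!a) p₀ =
      evalStep G (genStep G a (p₀.1, p₀.2, p₁)).2 (!a) p₁ := by
  apply Prod.ext
  · rw [← BitVec.xor_eq_zero_iff, evalStep_fst_xor_evalStep_fst G _ (!a) h, genStep_snd_fst,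
      BitVec.xor_self]
  · simpa using evalStep_genStep_snd_xor_s5 G a (!a) h

end Step

section Path

variable {lam : ℕ} (G : BitVec lam → BitVec lam × Bool × BitVec lam × Bool)
  (α : ℕ → Bool) (s0init s1init : BitVec lam)

theorem evalSt_congr (b : Bool) {x y : ℕ → Bool} {l : ℕ} (h : ∀ j, 1 ≤ j → j ≤ l → x j = y j) :
    evalSt G α s0init s1init b x l = evalSt G α s0init s1init b y l := by
  induction l with
  | zero => rfl
  | succ l ih =>
    rw [evalSt, evalSt, h (l + 1) (by omega) le_rfl, ih fun j h1 hj => h j h1 (by omega)]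

theorem gen_fst_eq_evalSt (l : ℕ) :
    (gen G α s0init s1init l).1 =
      ((evalSt G α s0init s1init false α l).1, (evalSt G α s0init s1init false α l).2,
        evalSt G α s0init s1init true α l) := by
  induction l with
  | zero => rfl
  | succ l ih => simpa only [evalSt, gen, ih] using genStep_fst G _ _ _

theorem evalSt_true_self_snd (l : ℕ) :
    (evalSt G α s0init s1init true α l).2 = !(evalSt G α s0init s1init false α l).2 := by
  induction l with
  | zero => rfl
  | succ l ih =>
    simp only [evalSt, gen, gen_fst_eq_evalSt]
    exact evalStep_genStep_self_snd G (α (l + 1)) ih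

theorem evalSt_succ_false_eq_evalSt_succ_true {x : ℕ → Bool} {l : ℕ}
    (h : ∀ j, 1 ≤ j → j ≤ l → x j = α j) (hne : x (l + 1) ≠ α (l + 1)) :
    evalSt G α s0init s1init false x (l + 1) = evalSt G α s0init s1init true x (l + 1) := by
  simp only [evalSt, gen, gen_fst_eq_evalSt, evalSt_congr G α s0init s1init _ h,
    Bool.eq_not_of_ne hne]
  exact evalStep_genStep_not_eq G (α (l + 1)) (evalSt_true_self_snd G α s0init s1init l)

theorem evalSt_false_eq_evalSt_true {x : ℕ → Bool} {l : ℕ}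
    (h : ¬ ∀ j, 1 ≤ j → j ≤ l → x j = α j) :
    evalSt G α s0init s1init false x l = evalSt G α s0init s1init true x l := by
  induction l with
  | zero => exact absurd (fun j h1 hj => by omega) h
  | succ l ih =>
    by_cases hl : ∀ j, 1 ≤ j → j ≤ l → x j = α j
    · have hne : x (l + 1) ≠ α (l + 1) := fun heq => h fun j h1 hj =>
        (Nat.le_succ_iff.mp hj).elim (hl j h1) fun hj => hj ▸ heq
      exact evalSt_succ_false_eq_evalSt_succ_true G α s0init s1init hl hne
    · rw [evalSt, evalSt, ih hl]

end Path

section Output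

variable {lam : ℕ} {Grp : Type*} [AddCommGroup Grp]
  (G : BitVec lam → BitVec lam × Bool × BitVec lam × Bool) (Convert : BitVec lam → Grp)
  (α : ℕ → Bool) (β : Grp) (s0init s1init : BitVec lam)

theorem output_congr (b : Bool) {x y : ℕ → Bool} {n : ℕ} (h : ∀ j, 1 ≤ j → j ≤ n → x j = y j) :
    output G Convert α β s0init s1init n b x = output G Convert α β s0init s1init n b y := by
  simp only [output, evalSt_congr G α s0init s1init b h]

theorem output_add_output_of_evalSt_eq {x : ℕ → Bool} {n : ℕ}
    (h : evalSt G α s0init s1init false x n = evalSt G α s0init s1init true x n) :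
    output G Convert α β s0init s1init n false x +
      output G Convert α β s0init s1init n true x = 0 := by
  simp [output, h]

theorem ite_finalCW_sub_ite_finalCW (n : ℕ) :
    (if (evalSt G α s0init s1init false α n).2 then
        finalCW G Convert α β s0init s1init n else 0) -
      (if (evalSt G α s0init s1init true α n).2 then
        finalCW G Convert α β s0init s1init n else 0) =
      β - Convert (evalSt G α s0init s1init false α n).1 +
        Convert (evalSt G α s0init s1init true α n).1 := by
  simp only [finalCW, gen_fst_eq_evalSt, evalSt_true_self_snd]
  cases (evalSt G α s0init s1init false α n).2 <;> simp

theorem output_add_output_self (n : ℕ) :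
    output G Convert α β s0init s1init n false α +
      output G Convert α β s0init s1init n true α = β := by
  have hcw := ite_finalCW_sub_ite_finalCW G Convert α β s0init s1init n
  rw [sub_eq_iff_eq_add] at hcw
  simp only [output, hcw, Bool.false_eq_true, if_false, if_true]
  abel

end Output

end DPF

/-- Correctness of the two-party binary DPF construction: for every choice of
the expansion function `G`, the function `Convert`, the initial seeds, the
point `α ∈ {0,1}^n` and the payload `β`, and every input `x ∈ {0,1}^n`, the
reconstructed output satisfies `y₀(x) + y₁(x) = β` if `x = α` (the first `n`
bits agree) and `y₀(x) + y₁(x) = 0` otherwise. -/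
theorem dpf_correctness {lam n : ℕ} {Grp : Type*} [AddCommGroup Grp]
    (G : BitVec lam → BitVec lam × Bool × BitVec lam × Bool)
    (Convert : BitVec lam → Grp) (α : ℕ → Bool) (β : Grp)
    (s0init s1init : BitVec lam) (x : ℕ → Bool) :
    ((∀ j, 1 ≤ j → j ≤ n → x j = α j) →
      DPF.output G Convert α β s0init s1init n false x +
        DPF.output G Convert α β s0init s1init n true x = β) ∧
    ((¬ ∀ j, 1 ≤ j → j ≤ n → x j = α j) →
      DPF.output G Convert α β s0init s1init n false x +
        DPF.output G Convert α β s0init s1init n true x = 0) := by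
  constructor
  · intro h
    rw [DPF.output_congr G Convert α β s0init s1init false h,
      DPF.output_congr G Convert α β s0init s1init true h]
    exact DPF.output_add_output_self G Convert α β s0init s1init n
  · intro h
    exact DPF.output_add_output_of_evalSt_eq G Convert α β s0init s1init
      (DPF.evalSt_false_eq_evalSt_true G α s0init s1init h)
end

section
/- In the two-party incremental DPF construction, for all choices of the expansion function G, the per-level functions Convert_l, the initial seeds, the point α ∈ {0,1}^n and the per-level payloads β_1 ∈ 𝔾_1, …, β_n ∈ 𝔾_n, and for every level 1 ≤ l ≤ n and every bit string x = x_1…x_l of length l, the reconstructed level-l output satisfies y_0^{(l)}(x) + y_1^{(l)}(x) = β_l if x = α_1…α_l (i.e., x is the length-l prefix of α), and y_0^{(l)}(x) + y_1^{(l)}(x) = 0 otherwise. -/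
/-!
The states of key generation are those reached by the two parties when they evaluate at `α`. There
the control bits always differ, because `t_CW^{Keep}` is chosen to make `t₀ ⊕ t₁ = 1`; hence exactly
one party adds `W_CW`, whose value and sign make the two outputs sum to `β_l`. At the first level
where `x` leaves `α`, exactly one party applies the correction word, which in the `Lose` direction
is the XOR of the two children. The parties therefore reach the same node, stay together from then
on since evaluation is deterministic with common correction words, and their outputs cancel.
-/

namespace IDPF

variable {lam : ℕ} {Gp : ℕ → Type*} [∀ l, AddCommGroup (Gp l)]

/-- Key-generation data of the incremental DPF after `l` levels, for the point
`α` (1-indexed bits), per-level payloads `β`, per-level functions `Convert`,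
and initial seeds `s0init`, `s1init`. The first component is the state
`(s₀^{(l)}, t₀^{(l)}, s₁^{(l)}, t₁^{(l)})`, the second is the level-`l`
correction word `(s_CW^{(l)}, t_CW^{L,(l)}, t_CW^{R,(l)})`, and the third is
the level-`l` group correction word `W_CW^{(l)} ∈ 𝔾_l` (dummy values at
level `0`). -/
def gen (G : BitVec lam → BitVec lam × Bool × BitVec lam × Bool)
    (Convert : ∀ l : ℕ, BitVec lam → BitVec lam × Gp l)
    (α : ℕ → Bool) (β : ∀ l : ℕ, Gp l) (s0init s1init : BitVec lam) :
    (l : ℕ) → (BitVec lam × Bool × BitVec lam × Bool) × (BitVec lam × Bool × Bool) × Gp l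
  | 0 => ((s0init, false, s1init, true), (0#lam, false, false), 0)
  | l + 1 =>
      let st := (gen G Convert α β s0init s1init l).1
      let s0 := st.1
      let t0 := st.2.1
      let s1 := st.2.2.1
      let t1 := st.2.2.2
      let (s0L, t0L, s0R, t0R) := G s0
      let (s1L, t1L, s1R, t1R) := G s1
      let a := α (l + 1)  -- Keep = R if a, Keep = L otherwise; Lose is the other
      let sCW : BitVec lam := if a then s0L ^^^ s1L else s0R ^^^ s1R
      let tCWL : Bool := (((t0L != t1L) != a) != true)
      let tCWR : Bool := ((t0R != t1R) != a)
      let s0keep := if a then s0R else s0L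
      let s1keep := if a then s1R else s1L
      let t0keep := if a then t0R else t0L
      let t1keep := if a then t1R else t1L
      let tCWkeep := if a then tCWR else tCWL
      let t0' := t0keep != (t0 && tCWkeep)
      let t1' := t1keep != (t1 && tCWkeep)
      let s0tilde := s0keep ^^^ (if t0 then sCW else 0#lam)
      let s1tilde := s1keep ^^^ (if t1 then sCW else 0#lam)
      let c0 := Convert (l + 1) s0tilde
      let c1 := Convert (l + 1) s1tilde
      let w := β (l + 1) - c0.2 + c1.2
      let WCW : Gp (l + 1) := if t1' then -w else w
      ((c0.1, t0', c1.1, t1'), (sCW, tCWL, tCWR), WCW)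

/-- Evaluation data `(σ^{(j)}, τ^{(j)}, ω^{(j)})` of party `b` (`b = false` is
party 0, `b = true` is party 1) after `j` levels on input `x` (1-indexed
bits), using the correction words produced by key generation. -/
def evalSt (G : BitVec lam → BitVec lam × Bool × BitVec lam × Bool)
    (Convert : ∀ l : ℕ, BitVec lam → BitVec lam × Gp l)
    (α : ℕ → Bool) (β : ∀ l : ℕ, Gp l) (s0init s1init : BitVec lam)
    (b : Bool) (x : ℕ → Bool) :
    (j : ℕ) → BitVec lam × Bool × Gp j
  | 0 => (if b then s1init else s0init, b, 0)
  | j + 1 =>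
      let st := evalSt G Convert α β s0init s1init b x j
      let σ := st.1
      let τ := st.2.1
      let (σL, τL, σR, τR) := G σ
      let cw := (gen G Convert α β s0init s1init (j + 1)).2.1
      let sCW := cw.1
      let tCWL := cw.2.1
      let tCWR := cw.2.2
      let σhatL := σL ^^^ (if τ then sCW else 0#lam)
      let σhatR := σR ^^^ (if τ then sCW else 0#lam)
      let τhatL := τL != (τ && tCWL)
      let τhatR := τR != (τ && tCWR)
      let σtilde := if x (j + 1) then σhatR else σhatL
      let τ' := if x (j + 1) then τhatR else τhatL
      let c := Convert (j + 1) σtilde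
      (c.1, τ', c.2)

/-- The level-`l` output of party `b` on input `x`:
`y_b^{(l)}(x) = (−1)^b · (ω^{(l)} + τ^{(l)} • W_CW^{(l)})`. -/
def output (G : BitVec lam → BitVec lam × Bool × BitVec lam × Bool)
    (Convert : ∀ l : ℕ, BitVec lam → BitVec lam × Gp l)
    (α : ℕ → Bool) (β : ∀ l : ℕ, Gp l) (s0init s1init : BitVec lam)
    (b : Bool) (x : ℕ → Bool) (l : ℕ) : Gp l :=
  let st := evalSt G Convert α β s0init s1init b x l
  let v := st.2.2 + (if st.2.1 then (gen G Convert α β s0init s1init l).2.2 else 0)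
  if b then -v else v

end IDPF

namespace IDPF

/-- A node of a party's evaluation tree, before `Convert` is applied: the seed and the control bit.
Correction words for a given direction have the same shape. -/
abbrev Node (lam : ℕ) : Type := BitVec lam × Bool

namespace Node

variable {lam : ℕ}

/-- Correction of the node `p` by `t • cw`. -/
def correct (p : Node lam) (t : Bool) (cw : Node lam) : Node lam :=
  (p.1 ^^^ if t then cw.1 else 0#lam, p.2 ^^ (t && cw.2))

theorem correct_xor_eq_correct_not (p₀ p₁ : Node lam) (t : Bool) :
    p₀.correct t (p₀.1 ^^^ p₁.1, p₀.2 ^^ p₁.2) = p₁.correct (!t) (p₀.1 ^^^ p₁.1, p₀.2 ^^ p₁.2) := by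
  have xor_cancel_right : p₁.1 ^^^ (p₀.1 ^^^ p₁.1) = p₀.1 := by
    rw [BitVec.xor_comm p₀.1, ← BitVec.xor_assoc, BitVec.xor_self, BitVec.zero_xor]
  have xor_cancel_left : p₀.1 ^^^ (p₀.1 ^^^ p₁.1) = p₁.1 := by
    rw [← BitVec.xor_assoc, BitVec.xor_self, BitVec.zero_xor]
  cases t <;> simp [correct, xor_cancel_left, xor_cancel_right, Bool.xor_left_comm p₁.2]

theorem correct_not_snd_eq_not (p₀ p₁ cw : Node lam) (t : Bool) (hcw : cw.2 = !(p₀.2 ^^ p₁.2)) :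
    (p₁.correct (!t) cw).2 = !(p₀.correct t cw).2 := by
  cases t <;> simp [correct, hcw, Bool.xor_left_comm p₁.2]

end Node

/-- The child of a seed in direction `d` (`true` is `R`, `false` is `L`), as given by `G`. -/
def child {lam : ℕ} (G : BitVec lam → BitVec lam × Bool × BitVec lam × Bool) (d : Bool)
    (s : BitVec lam) : Node lam :=
  if d then (G s).2.2 else ((G s).1, (G s).2.1)

theorem correctedShare_sub_correctedShare {A : Type*} [AddCommGroup A] (β ω₀ ω₁ : A) (t : Bool) :
    let W := if !t then -(β - ω₀ + ω₁) else β - ω₀ + ω₁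
    (ω₀ + if t then W else 0) - (ω₁ + if !t then W else 0) = β := by
  cases t with
  | false =>
    change ω₀ + 0 - (ω₁ + -(β - ω₀ + ω₁)) = β
    abel
  | true =>
    change ω₀ + (β - ω₀ + ω₁) - (ω₁ + 0) = β
    abel

section Construction

variable {lam : ℕ} {Gp : ℕ → Type*} [∀ l, AddCommGroup (Gp l)]
  (G : BitVec lam → BitVec lam × Bool × BitVec lam × Bool)
  (Convert : ∀ l : ℕ, BitVec lam → BitVec lam × Gp l)
  (α : ℕ → Bool) (β : ∀ l : ℕ, Gp l) (s₀ s₁ : BitVec lam)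

/-- The level-`l` correction word `(s_CW^{(l)}, t_CW^{d,(l)})` for direction `d`
(`true` is `R`, `false` is `L`). -/
def correctionWord (l : ℕ) (d : Bool) : Node lam :=
  let cw := (gen G Convert α β s₀ s₁ l).2.1
  (cw.1, if d then cw.2.2 else cw.2.1)

/-- The child in direction `d` of party `b`'s level-`j` state on input `x`, after correction. -/
def correctedChild (b : Bool) (x : ℕ → Bool) (j : ℕ) (d : Bool) : Node lam :=
  let st := evalSt G Convert α β s₀ s₁ b x j
  (child G d st.1).correct st.2.1 (correctionWord G Convert α β s₀ s₁ (j + 1) d)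

theorem evalSt_succ (b : Bool) (x : ℕ → Bool) (j : ℕ) :
    evalSt G Convert α β s₀ s₁ b x (j + 1) =
      let p := correctedChild G Convert α β s₀ s₁ b x j (x (j + 1))
      ((Convert (j + 1) p.1).1, p.2, (Convert (j + 1) p.1).2) := by
  cases h : x (j + 1) <;>
    simp [evalSt, h, correctedChild, child, Node.correct, correctionWord]

theorem evalSt_congr {x y : ℕ → Bool} {l : ℕ} (hxy : Set.EqOn x y (Set.Icc 1 l)) (b : Bool) :
    evalSt G Convert α β s₀ s₁ b x l = evalSt G Convert α β s₀ s₁ b y l := by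
  induction l with
  | zero => rfl
  | succ l ih =>
    have hprefix := ih (hxy.mono (Set.Icc_subset_Icc_right l.le_succ))
    simp only [evalSt_succ, correctedChild, hprefix, hxy (Set.right_mem_Icc.mpr l.succ_pos)]

theorem output_congr {x y : ℕ → Bool} {l : ℕ} (hxy : Set.EqOn x y (Set.Icc 1 l)) (b : Bool) :
    output G Convert α β s₀ s₁ b x l = output G Convert α β s₀ s₁ b y l := by
  simp only [output, evalSt_congr G Convert α β s₀ s₁ hxy]

theorem gen_fst_eq_evalSt (l : ℕ) :
    (gen G Convert α β s₀ s₁ l).1 =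
      let st₀ := evalSt G Convert α β s₀ s₁ false α l
      let st₁ := evalSt G Convert α β s₀ s₁ true α l
      (st₀.1, st₀.2.1, st₁.1, st₁.2.1) := by
  induction l with
  | zero => rfl
  | succ l ih => cases h : α (l + 1) <;> simp [evalSt, gen, ih, h]

theorem gen_snd_snd_succ_eq_evalSt (l : ℕ) :
    (gen G Convert α β s₀ s₁ (l + 1)).2.2 =
      let st₀ := evalSt G Convert α β s₀ s₁ false α (l + 1)
      let st₁ := evalSt G Convert α β s₀ s₁ true α (l + 1)
      let w := β (l + 1) - st₀.2.2 + st₁.2.2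
      if st₁.2.1 then -w else w := by
  cases h : α (l + 1) <;> simp [evalSt, gen, gen_fst_eq_evalSt, h]

theorem correctionWord_lose (l : ℕ) :
    correctionWord G Convert α β s₀ s₁ (l + 1) (!α (l + 1)) =
      let p₀ := child G (!α (l + 1)) (evalSt G Convert α β s₀ s₁ false α l).1
      let p₁ := child G (!α (l + 1)) (evalSt G Convert α β s₀ s₁ true α l).1
      (p₀.1 ^^^ p₁.1, p₀.2 ^^ p₁.2) := by
  cases h : α (l + 1) <;> simp [correctionWord, child, gen, gen_fst_eq_evalSt, h]

theorem correctionWord_keep_snd (l : ℕ) :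
    (correctionWord G Convert α β s₀ s₁ (l + 1) (α (l + 1))).2 =
      let p₀ := child G (α (l + 1)) (evalSt G Convert α β s₀ s₁ false α l).1
      let p₁ := child G (α (l + 1)) (evalSt G Convert α β s₀ s₁ true α l).1
      !(p₀.2 ^^ p₁.2) := by
  cases h : α (l + 1) <;> simp [correctionWord, child, gen, gen_fst_eq_evalSt, h]

theorem controlBit_true_eq_not (l : ℕ) :
    (evalSt G Convert α β s₀ s₁ true α l).2.1 =
      !(evalSt G Convert α β s₀ s₁ false α l).2.1 := by
  induction l with
  | zero => rfl
  | succ l ih =>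
    simp only [evalSt_succ, correctedChild, ih]
    exact Node.correct_not_snd_eq_not _ _ _ _ (correctionWord_keep_snd G Convert α β s₀ s₁ l)

theorem correctedChild_false_lose_eq_true (l : ℕ) :
    correctedChild G Convert α β s₀ s₁ false α l (!α (l + 1)) =
      correctedChild G Convert α β s₀ s₁ true α l (!α (l + 1)) := by
  simp only [correctedChild, controlBit_true_eq_not, correctionWord_lose]
  exact Node.correct_xor_eq_correct_not _ _ _

theorem evalSt_false_eq_true_of_not_eqOn {x : ℕ → Bool} {l : ℕ}
    (hx : ¬ Set.EqOn x α (Set.Icc 1 l)) :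
    evalSt G Convert α β s₀ s₁ false x l = evalSt G Convert α β s₀ s₁ true x l := by
  induction l with
  | zero => exact absurd (by simp) hx
  | succ l ih =>
    by_cases hprefix : Set.EqOn x α (Set.Icc 1 l)
    · have hlose : x (l + 1) = !α (l + 1) := by
        rw [Bool.eq_not]
        intro hkeep
        refine hx fun j hj => ?_
        rcases Nat.le_succ_iff.mp hj.2 with hle | rfl
        · exact hprefix ⟨hj.1, hle⟩
        · exact hkeep
      have hchild (b : Bool) : correctedChild G Convert α β s₀ s₁ b x l (!α (l + 1)) =
          correctedChild G Convert α β s₀ s₁ b α l (!α (l + 1)) := by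
        simp only [correctedChild, evalSt_congr G Convert α β s₀ s₁ hprefix]
      simp only [evalSt_succ, hlose, hchild, correctedChild_false_lose_eq_true]
    · simp only [evalSt_succ, correctedChild, ih hprefix]

theorem output_false_add_output_true_eq_sub (x : ℕ → Bool) (l : ℕ) :
    output G Convert α β s₀ s₁ false x l + output G Convert α β s₀ s₁ true x l =
      let st₀ := evalSt G Convert α β s₀ s₁ false x l
      let st₁ := evalSt G Convert α β s₀ s₁ true x l
      let W := (gen G Convert α β s₀ s₁ l).2.2
      (st₀.2.2 + if st₀.2.1 then W else 0) - (st₁.2.2 + if st₁.2.1 then W else 0) := by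
  simp [output, sub_eq_add_neg]

theorem output_false_add_output_true_self (l : ℕ) :
    output G Convert α β s₀ s₁ false α (l + 1) + output G Convert α β s₀ s₁ true α (l + 1) =
      β (l + 1) := by
  simp only [output_false_add_output_true_eq_sub, gen_snd_snd_succ_eq_evalSt,
    controlBit_true_eq_not]
  exact correctedShare_sub_correctedShare _ _ _ _

theorem output_false_add_output_true_eq_zero {x : ℕ → Bool} {l : ℕ}
    (hx : ¬ Set.EqOn x α (Set.Icc 1 l)) :
    output G Convert α β s₀ s₁ false x l + output G Convert α β s₀ s₁ true x l = 0 := by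
  simp only [output_false_add_output_true_eq_sub,
    evalSt_false_eq_true_of_not_eqOn G Convert α β s₀ s₁ hx, sub_self]

end Construction

end IDPF

/-- Correctness of the two-party incremental DPF construction: for all choices
of the expansion function `G`, the per-level functions `Convert_l`, the initial
seeds, the point `α ∈ {0,1}^n` and the per-level payloads `β_l ∈ 𝔾_l`, and for
every level `1 ≤ l ≤ n` and every bit string `x` of length `l`, the
reconstructed level-`l` output satisfies `y₀^{(l)}(x) + y₁^{(l)}(x) = β_l` if
`x` is the length-`l` prefix of `α`, and `0` otherwise. -/
theorem incremental_dpf_correctness {lam n : ℕ} {Gp : ℕ → Type*}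
    [∀ l, AddCommGroup (Gp l)]
    (G : BitVec lam → BitVec lam × Bool × BitVec lam × Bool)
    (Convert : ∀ l : ℕ, BitVec lam → BitVec lam × Gp l)
    (α : ℕ → Bool) (β : ∀ l : ℕ, Gp l) (s0init s1init : BitVec lam)
    (l : ℕ) (hl1 : 1 ≤ l) (hl2 : l ≤ n) (x : ℕ → Bool) :
    ((∀ j, 1 ≤ j → j ≤ l → x j = α j) →
      IDPF.output G Convert α β s0init s1init false x l +
        IDPF.output G Convert α β s0init s1init true x l = β l) ∧
    ((¬ ∀ j, 1 ≤ j → j ≤ l → x j = α j) →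
      IDPF.output G Convert α β s0init s1init false x l +
        IDPF.output G Convert α β s0init s1init true x l = 0) := by
  have eqOn_iff : (∀ j, 1 ≤ j → j ≤ l → x j = α j) ↔ Set.EqOn x α (Set.Icc 1 l) := by
    simp [Set.EqOn]
  rw [eqOn_iff]
  refine ⟨fun hx => ?_, IDPF.output_false_add_output_true_eq_zero G Convert α β s0init s1init⟩
  obtain ⟨k, rfl⟩ := Nat.exists_eq_add_of_le' hl1
  simp only [IDPF.output_congr G Convert α β s0init s1init hx]
  exact IDPF.output_false_add_output_true_self G Convert α β s0init s1init k
end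

section
/- Height of the median-split KD-tree: define H : ℕ → ℕ by H(0) = 0 and, for m ≥ 1, H(m) = 1 + max( H(⌊m/2⌋), H(m − 1 − ⌊m/2⌋) ). Then for every m ≥ 1, H(m) = ⌊log₂ m⌋ + 1 (with ⌊log₂ m⌋ the base-2 natural-number logarithm); in particular the KD-tree built on m points by median splitting is balanced with height exactly ⌊log₂ m⌋ + 1. -/
/-!
The bit length `Nat.size` extends `Nat.log 2 m + 1` by the value `0` at `m = 0`, so it agrees with
the height on empty trees too. It is monotone, so the maximum over the two subtrees is its value
at the size `m / 2` of the larger one, and the height recursion becomes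
`size m = size (m / 2) + 1`: halving drops one bit.
-/

theorem size_eq_log_two_add_one {n : ℕ} (hn : n ≠ 0) : n.size = Nat.log 2 n + 1 :=
  eq_of_forall_ge_iff fun k ↦ by
    rw [Nat.size_le, Nat.succ_le_iff, Nat.log_lt_iff_lt_pow one_lt_two hn]

theorem size_eq_size_div_two_add_one {n : ℕ} (hn : n ≠ 0) : n.size = (n / 2).size + 1 := by
  have hbit : Nat.bit n.bodd (n / 2) = n := by rw [← Nat.div2_val, Nat.bit_bodd_div2]
  have hsize := Nat.size_bit (hbit.trans_ne hn)
  rwa [hbit] at hsize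

theorem height_eq_size_of_max_split_eq_half {H l r : ℕ → ℕ} (h0 : H 0 = 0)
    (hsplit : ∀ m, 1 ≤ m → max (l m) (r m) = m / 2)
    (hrec : ∀ m, 1 ≤ m → H m = 1 + max (H (l m)) (H (r m))) (m : ℕ) :
    H m = m.size := by
  induction m using Nat.strong_induction_on with
  | _ m ih =>
    rcases Nat.eq_zero_or_pos m with rfl | hm
    · rw [h0, Nat.size_zero]
    have hmax := hsplit m hm
    have hsize : Monotone Nat.size := fun _ _ ↦ Nat.size_le_size
    calc
      H m = 1 + max (l m).size (r m).size := by
        rw [hrec m hm, ih (l m) (by omega), ih (r m) (by omega)]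
      _ = 1 + (m / 2).size := by rw [← hsize.map_max, hmax]
      _ = m.size := by rw [size_eq_size_div_two_add_one hm.ne', add_comm]

/-- Besides the upper median `l m = m / 2` this covers the lower median `l m = (m - 1) / 2`. -/
theorem kdtree_height_eq_log_general {H l r : ℕ → ℕ} (h0 : H 0 = 0)
    (hsplit : ∀ m, 1 ≤ m → max (l m) (r m) = m / 2)
    (hrec : ∀ m, 1 ≤ m → H m = 1 + max (H (l m)) (H (r m))) :
    ∀ m, 1 ≤ m → H m = Nat.log 2 m + 1 := fun m hm ↦
  (height_eq_size_of_max_split_eq_half h0 hsplit hrec m).trans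
    (size_eq_log_two_add_one (Nat.pos_iff_ne_zero.1 hm))

/-- Height of the median-split KD-tree: if `H 0 = 0` and, for every `m ≥ 1`,
`H m = 1 + max (H ⌊m/2⌋) (H (m − 1 − ⌊m/2⌋))` (the recursion of the KD-tree
built by median splitting), then for every `m ≥ 1` we have
`H m = ⌊log₂ m⌋ + 1`: the median-split KD-tree on `m` points is balanced with
height exactly `⌊log₂ m⌋ + 1`. -/
theorem kdtree_height_eq_log (H : ℕ → ℕ) (h0 : H 0 = 0)
    (hrec : ∀ m : ℕ, 1 ≤ m → H m = 1 + max (H (m / 2)) (H (m - 1 - m / 2))) :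
    ∀ m : ℕ, 1 ≤ m → H m = Nat.log 2 m + 1 :=
  kdtree_height_eq_log_general h0 (fun m _ ↦ max_eq_left (by omega)) hrec
end
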